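/- Let R be a ring. A left R-module M is Gorenstein projective if and only if there exists a short exact sequence of left R-modules 0 → M → P → G → 0 where P is projective and G is Gorenstein projective. -/

import Mathlib

universe u

/-- A witness that `M` is a Gorenstein projective left `R`-module: a doubly infinite exact
sequence of projective left `R`-modules `⋯ → P (-1) → P 0 → P 1 → ⋯` with
`M ≅ Im (P 0 → P 1)`, which stays exact after applying `Hom_R(−, Q)` for every projective
left `R`-module `Q`. -/
structure GorensteinProjectiveWitness (R : Type u) [Ring R]
    (M : Type u) [AddCommGroup M] [Module R M] where
  P : ℤ → Type u
  [acg : ∀ i, AddCommGroup (P i)]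
  [mod : ∀ i, Module R (P i)]
  d : ∀ i, P i →ₗ[R] P (i + 1)
  proj : ∀ i, Module.Projective R (P i)
  exact : ∀ i, Function.Exact (d i) (d (i + 1))
  iso : M ≃ₗ[R] LinearMap.range (d 0)
  homExact : ∀ (Q : Type u) [AddCommGroup Q] [Module R Q], Module.Projective R Q →
    ∀ i, Function.Exact (fun f : P (i + 1 + 1) →ₗ[R] Q => f ∘ₗ d (i + 1))
      (fun f : P (i + 1) →ₗ[R] Q => f ∘ₗ d i)

/-- A left `R`-module is Gorenstein projective if it admits a Gorenstein projective
witness. -/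
def IsGorensteinProjective (R : Type u) [Ring R]
    (M : Type u) [AddCommGroup M] [Module R M] : Prop :=
  Nonempty (GorensteinProjectiveWitness R M)

/-- `0 → A → B → C → 0` is a short exact sequence. -/
def IsShortExact {R : Type u} [Ring R] {A B C : Type u}
    [AddCommGroup A] [Module R A] [AddCommGroup B] [Module R B] [AddCommGroup C] [Module R C]
    (f : A →ₗ[R] B) (g : B →ₗ[R] C) : Prop :=
  Function.Injective f ∧ Function.Exact f g ∧ Function.Surjective g

/-!
A short exact sequence `0 → A → P → B → 0` with `P` projective shifts dimensions:
`Ext^(n+1)(A, Q) ≅ Ext^(n+2)(B, Q)`, and it stays exact under `Hom(-, Q)` iff `Ext^1(B, Q) = 0`.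
Cutting a totally acyclic complex into such sequences therefore shows that `M` is Gorenstein
projective iff it starts a sequence of cosyzygies `M = C₀, C₁, C₂, …` all of whose members have
vanishing positive `Ext` into projectives: to the left, any projective resolution of `M` will do,
because the vanishing is inherited by syzygies. Given `0 → M → P → G → 0`, such a sequence for `G`
is prolonged by `M`, and conversely the tail of one for `M` serves `C₁`.
-/

open CategoryTheory Abelian

section Abelian

universe w v v'

variable {C : Type v} [Category.{v'} C] [Abelian C]

/-- `A` is a first syzygy of `B`: the kernel of some epimorphism onto `B` from a projective
object. The presentation is not part of the data, so `A` is determined by `B` only up to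
projective summands. -/
def IsSyzygy (A B : C) : Prop :=
  ∃ (P : C) (f : A ⟶ P) (g : P ⟶ B) (zero : f ≫ g = 0),
    (ShortComplex.mk f g zero).ShortExact ∧ Projective P

theorem exists_isSyzygy [EnoughProjectives C] (X : C) : ∃ A : C, IsSyzygy A X :=
  ⟨_, _, Limits.kernel.ι (Projective.π X), Projective.π X, Limits.kernel.condition _,
    { exact := ShortComplex.exact_of_f_is_kernel _ (Limits.kernelIsKernel _) }, inferInstance⟩

variable [HasExt.{w} C]

theorem subsingleton_ext_one_iff_of_shortExact {S : ShortComplex C} (hS : S.ShortExact)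
    [Projective S.X₂] (Y : C) :
    Subsingleton (Ext.{w} S.X₃ Y 1) ↔ ∀ α : S.X₁ ⟶ Y, ∃ β : S.X₂ ⟶ Y, S.f ≫ β = α := by
  constructor
  · intro hY α
    obtain ⟨x, hx⟩ := Ext.contravariant_sequence_exact₁ hS Y (Ext.mk₀ α) (add_zero 1)
      (Subsingleton.elim _ _)
    obtain ⟨β, rfl⟩ := (Ext.mk₀_bijective _ _).surjective x
    rw [Ext.mk₀_comp_mk₀] at hx
    exact ⟨β, (Ext.mk₀_bijective _ _).injective hx⟩
  · refine fun h => subsingleton_of_forall_eq 0 fun x => ?_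
    obtain ⟨y, rfl⟩ := Ext.contravariant_sequence_exact₃ hS Y x (Ext.eq_zero_of_projective _)
      (add_zero 1)
    obtain ⟨α, rfl⟩ := (Ext.mk₀_bijective _ _).surjective y
    obtain ⟨β, rfl⟩ := h α
    rw [← Ext.mk₀_comp_mk₀, hS.extClass_comp_assoc]

theorem subsingleton_ext_succ_iff_of_shortExact {S : ShortComplex C} (hS : S.ShortExact)
    [Projective S.X₂] (Y : C) (n : ℕ) :
    Subsingleton (Ext.{w} S.X₃ Y (n + 2)) ↔ Subsingleton (Ext.{w} S.X₁ Y (n + 1)) := by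
  constructor <;> refine fun h => subsingleton_of_forall_eq 0 fun x => ?_
  · obtain ⟨y, rfl⟩ := Ext.contravariant_sequence_exact₁ hS Y x (add_comm 1 (n + 1))
      (Subsingleton.elim _ _)
    rw [y.eq_zero_of_projective, Ext.comp_zero]
  · obtain ⟨y, rfl⟩ := Ext.contravariant_sequence_exact₃ hS Y x (Ext.eq_zero_of_projective _)
      (add_comm 1 (n + 1))
    rw [Subsingleton.elim y 0, Ext.comp_zero]

/-- `X` belongs to the left orthogonal class of the projective objects: the groups `Ext^i(X, Q)`
vanish for `i ≥ 1` and `Q` projective. -/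
def IsLeftOrthogonalToProjectives (X : C) : Prop :=
  ∀ (Q : C) [Projective Q] (n : ℕ), Subsingleton (Ext.{w} X Q (n + 1))

theorem IsSyzygy.isLeftOrthogonalToProjectives {A B : C} (h : IsSyzygy A B)
    (hB : IsLeftOrthogonalToProjectives.{w} B) : IsLeftOrthogonalToProjectives.{w} A := by
  obtain ⟨P, f, g, zero, hS, _⟩ := h
  exact fun Q _ n => (subsingleton_ext_succ_iff_of_shortExact hS Q n).1 (hB Q (n + 1))

theorem isLeftOrthogonalToProjectives_of_isSyzygy_int {Z : ℤ → C}
    (hZ : ∀ i, IsSyzygy (Z i) (Z (i + 1)))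
    (hExt : ∀ i (Q : C) [Projective Q], Subsingleton (Ext.{w} (Z i) Q 1)) (i : ℤ) :
    IsLeftOrthogonalToProjectives.{w} (Z i) := by
  intro Q _ n
  induction n generalizing i with
  | zero => exact hExt i Q
  | succ n ih =>
    obtain ⟨j, rfl⟩ : ∃ j, i = j + 1 := ⟨i - 1, (sub_add_cancel i 1).symm⟩
    obtain ⟨P, f, g, zero, hS, _⟩ := hZ j
    exact (subsingleton_ext_succ_iff_of_shortExact hS Q n).2 (ih j)

theorem exists_isSyzygy_int_extension [EnoughProjectives C] {c : ℕ → C}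
    (hc : ∀ n, IsSyzygy (c n) (c (n + 1)))
    (horth : ∀ n, IsLeftOrthogonalToProjectives.{w} (c n)) :
    ∃ Z : ℤ → C, (∀ n : ℕ, Z n = c n) ∧ (∀ i, IsSyzygy (Z i) (Z (i + 1))) ∧
      ∀ i, IsLeftOrthogonalToProjectives.{w} (Z i) := by
  choose syzygy isSyzygy using exists_isSyzygy (C := C)
  let resolution (n : ℕ) : C := syzygy^[n] (c 0)
  have resolution_step (n : ℕ) : IsSyzygy (resolution (n + 1)) (resolution n) := by
    simp only [resolution, Function.iterate_succ_apply']
    exact isSyzygy _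
  have resolution_orth (n : ℕ) : IsLeftOrthogonalToProjectives.{w} (resolution n) := by
    induction n with
    | zero => exact horth 0
    | succ n ih => exact (resolution_step n).isLeftOrthogonalToProjectives ih
  refine ⟨fun | .ofNat n => c n | .negSucc n => resolution (n + 1), fun _ => rfl, ?_, ?_⟩
  · rintro (n | _ | n)
    exacts [hc n, resolution_step 0, resolution_step (n + 1)]
  · rintro (n | n)
    exacts [horth n, resolution_orth (n + 1)]

end Abelian

section Exactness

theorem exact_comp_comp_of_surjective_of_injective {α α' β γ γ' : Type*} [Zero γ] [Zero γ']
    {p : α' → α} {f : α → β} {g : β → γ} {i : γ → γ'}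
    (hfg : Function.Exact f g) (hp : Function.Surjective p)
    (hi : Function.Injective i) (hi₀ : i 0 = 0) : Function.Exact (f ∘ p) (i ∘ g) := by
  intro y
  rw [hp.range_comp]
  exact hfg.comp_injective _ hi hi₀ y

variable {R : Type*} [Ring R] {A B D Q : Type*} [AddCommGroup A] [Module R A] [AddCommGroup B]
  [Module R B] [AddCommGroup D] [Module R D] [AddCommGroup Q] [Module R Q]

theorem exact_precomp_of_exact_of_surjective {f : A →ₗ[R] B} {g : B →ₗ[R] D}
    (hfg : Function.Exact f g) (hg : Function.Surjective g) :
    Function.Exact (fun w : D →ₗ[R] Q => w ∘ₗ g) (fun w : B →ₗ[R] Q => w ∘ₗ f) := by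
  intro w
  constructor
  · intro hw
    refine ⟨(LinearMap.range f).liftQ w (LinearMap.range_le_ker_iff.2 hw) ∘ₗ
      (hfg.linearEquivOfSurjective hg).symm, LinearMap.ext fun b => ?_⟩
    have : (hfg.linearEquivOfSurjective hg).symm (g b) = (LinearMap.range f).mkQ b := by
      rw [LinearEquiv.symm_apply_eq]; rfl
    simp [this]
  · rintro ⟨w, rfl⟩
    simp only [LinearMap.comp_assoc, hfg.linearMap_comp_eq_zero, LinearMap.comp_zero]

end Exactness

section Modules

variable {R : Type u} [Ring R]

theorem isSyzygy_iff_exists_isShortExact {A B : ModuleCat.{u} R} :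
    IsSyzygy A B ↔ ∃ (P : ModuleCat.{u} R) (f : A →ₗ[R] P) (g : P →ₗ[R] B),
      IsShortExact f g ∧ Module.Projective R P := by
  constructor
  · rintro ⟨P, f, g, zero, hS, _⟩
    exact ⟨P, f.hom, g.hom, ⟨hS.moduleCat_injective_f,
      (ShortComplex.ShortExact.moduleCat_exact_iff_function_exact _).1 hS.exact,
      hS.moduleCat_surjective_g⟩, inferInstance⟩
  · rintro ⟨P, f, g, ⟨hf, hfg, hg⟩, _⟩
    exact ⟨P, ModuleCat.ofHom f, ModuleCat.ofHom g,
      ModuleCat.hom_ext hfg.linearMap_comp_eq_zero,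
      ModuleCat.shortComplex_shortExact _ hfg hf hg, inferInstance⟩

section

variable {A P B : Type u} [AddCommGroup A] [Module R A] [AddCommGroup P] [Module R P]
  [AddCommGroup B] [Module R B]

theorem IsShortExact.subsingleton_ext_one_iff {f : A →ₗ[R] P} {g : P →ₗ[R] B}
    (h : IsShortExact f g) [Module.Projective R P] (Q : ModuleCat.{u} R) :
    Subsingleton (Ext.{u} (ModuleCat.of R B) Q 1) ↔
      Function.Surjective fun w : P →ₗ[R] Q => w ∘ₗ f := by
  obtain ⟨hf, hfg, hg⟩ := h
  let S := ModuleCat.shortComplexOfCompEqZero f g hfg.linearMap_comp_eq_zero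
  have : Projective S.X₂ := inferInstanceAs (Projective (ModuleCat.of R P))
  rw [subsingleton_ext_one_iff_of_shortExact (S := S)
    (ModuleCat.shortComplex_shortExact S hfg hf hg) Q]
  constructor
  · intro h w
    obtain ⟨w', hw'⟩ := h (ModuleCat.ofHom w)
    exact ⟨w'.hom, congrArg ModuleCat.Hom.hom hw'⟩
  · intro h w
    obtain ⟨w', hw'⟩ := h w.hom
    exact ⟨ModuleCat.ofHom w', ModuleCat.hom_ext hw'⟩

theorem isShortExact_subtype_rangeRestrict {f : A →ₗ[R] P} {g : P →ₗ[R] B}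
    (h : Function.Exact f g) : IsShortExact (LinearMap.range f).subtype g.rangeRestrict :=
  ⟨Submodule.subtype_injective _, h.linearMap_rangeRestrict, g.surjective_rangeRestrict⟩

theorem IsShortExact.comp_equiv {A' : Type u} [AddCommGroup A'] [Module R A'] {f : A →ₗ[R] P}
    {g : P →ₗ[R] B} (h : IsShortExact f g) (e : A' ≃ₗ[R] A) : IsShortExact (f ∘ₗ e.toLinearMap) g :=
  ⟨h.1.comp e.injective, LinearEquiv.precomp_exact_iff_exact.2 h.2.1, h.2.2⟩

end

namespace GorensteinProjectiveWitness

variable {M : Type u} [AddCommGroup M] [Module R M]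

attribute [instance] acg mod proj

/-- The cocycle modules of the totally acyclic complex, indexed so that `W.cocycle 0 ≅ M`. -/
abbrev cocycle (W : GorensteinProjectiveWitness R M) (i : ℤ) : ModuleCat.{u} R :=
  ModuleCat.of R (LinearMap.range (W.d i))

theorem isSyzygy_cocycle (W : GorensteinProjectiveWitness R M) (i : ℤ) :
    IsSyzygy (W.cocycle i) (W.cocycle (i + 1)) :=
  isSyzygy_iff_exists_isShortExact.2 ⟨ModuleCat.of R (W.P (i + 1)), _, _,
    isShortExact_subtype_rangeRestrict (W.exact i), W.proj _⟩

theorem isSyzygy_cocycle_one (W : GorensteinProjectiveWitness R M) :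
    IsSyzygy (ModuleCat.of R M) (W.cocycle 1) :=
  isSyzygy_iff_exists_isShortExact.2 ⟨ModuleCat.of R (W.P (0 + 1)), _, _,
    (isShortExact_subtype_rangeRestrict (W.exact 0)).comp_equiv W.iso, W.proj _⟩

theorem surjective_precomp_subtype (W : GorensteinProjectiveWitness R M) (i : ℤ) (Q : Type u)
    [AddCommGroup Q] [Module R Q] [Module.Projective R Q] :
    Function.Surjective fun w : W.P (i + 1 + 1) →ₗ[R] Q =>
      w ∘ₗ (LinearMap.range (W.d (i + 1))).subtype := by
  intro w
  have hw : (w ∘ₗ (W.d (i + 1)).rangeRestrict) ∘ₗ W.d i = 0 := by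
    have : (W.d (i + 1)).rangeRestrict ∘ₗ W.d i = 0 :=
      LinearMap.ext fun x => Subtype.ext ((W.exact i).apply_apply_eq_zero x)
    rw [LinearMap.comp_assoc, this, LinearMap.comp_zero]
  obtain ⟨w', hw'⟩ := (W.homExact Q inferInstance i _).1 hw
  refine ⟨w', LinearMap.ext ?_⟩
  rintro ⟨_, x, rfl⟩
  exact LinearMap.congr_fun hw' x

theorem isLeftOrthogonalToProjectives_cocycle (W : GorensteinProjectiveWitness R M) (i : ℤ) :
    IsLeftOrthogonalToProjectives.{u} (W.cocycle i) := by
  refine isLeftOrthogonalToProjectives_of_isSyzygy_int W.isSyzygy_cocycle (fun i Q _ => ?_) i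
  obtain ⟨j, rfl⟩ : ∃ j, i = j + 1 + 1 := ⟨i - 2, by ring⟩
  exact ((isShortExact_subtype_rangeRestrict (W.exact (j + 1))).subsingleton_ext_one_iff Q).2
    (W.surjective_precomp_subtype j Q)

end GorensteinProjectiveWitness

theorem isGorensteinProjective_of_isSyzygy_int {Z : ℤ → ModuleCat.{u} R}
    (hZ : ∀ i, IsSyzygy (Z i) (Z (i + 1)))
    (horth : ∀ i, IsLeftOrthogonalToProjectives.{u} (Z i)) : IsGorensteinProjective R (Z 1) := by
  choose P f g hfg hP using fun i => isSyzygy_iff_exists_isShortExact.1 (hZ i)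
  have range_d : LinearMap.range (f (0 + 1)) = LinearMap.range (f (0 + 1) ∘ₗ g 0) :=
    (LinearMap.range_comp_of_range_eq_top _ (LinearMap.range_eq_top.2 (hfg 0).2.2)).symm
  refine ⟨{
    P := fun i => P i
    d := fun i => f (i + 1) ∘ₗ g i
    proj := hP
    exact := fun i => exact_comp_comp_of_surjective_of_injective (p := g i) (i := f (i + 1 + 1))
      (hfg (i + 1)).2.1 (hfg i).2.2 (hfg (i + 1 + 1)).1 (map_zero _)
    iso := LinearEquiv.ofInjective _ (hfg (0 + 1)).1 ≪≫ₗ LinearEquiv.ofEq _ _ range_d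
    homExact := fun Q _ _ _ i => ?_ }⟩
  have surjective_precomp : Function.Surjective fun w : P (i + 1 + 1) →ₗ[R] Q =>
      w ∘ₗ f (i + 1 + 1) :=
    ((hfg _).subsingleton_ext_one_iff (ModuleCat.of R Q)).1 (horth _ (ModuleCat.of R Q) 0)
  have injective_precomp : Function.Injective fun w : Z (i + 1) →ₗ[R] Q => w ∘ₗ g i :=
    fun _ _ => (LinearMap.cancel_right (hfg i).2.2).1
  exact exact_comp_comp_of_surjective_of_injective
    (exact_precomp_of_exact_of_surjective (hfg (i + 1)).2.1 (hfg (i + 1)).2.2)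
    surjective_precomp injective_precomp (LinearMap.zero_comp _)

theorem isGorensteinProjective_iff_exists_cosyzygies (M : ModuleCat.{u} R) :
    IsGorensteinProjective R M ↔ ∃ c : ℕ → ModuleCat.{u} R, c 0 = M ∧
      ∀ n, IsSyzygy (c n) (c (n + 1)) ∧ IsLeftOrthogonalToProjectives.{u} (c n) := by
  constructor
  · rintro ⟨W⟩
    refine ⟨fun | 0 => M | n + 1 => W.cocycle (n + 1), rfl, ?_⟩
    rintro (_ | n)
    · exact ⟨W.isSyzygy_cocycle_one, W.isSyzygy_cocycle_one.isLeftOrthogonalToProjectives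
        (W.isLeftOrthogonalToProjectives_cocycle 1)⟩
    · exact ⟨mod_cast W.isSyzygy_cocycle (n + 1), W.isLeftOrthogonalToProjectives_cocycle _⟩
  · rintro ⟨c, rfl, hc⟩
    obtain ⟨Z, hZc, hZ, horth⟩ :=
      exists_isSyzygy_int_extension (fun n => (hc n).1) (fun n => (hc n).2)
    have shifted (i : ℤ) : IsSyzygy (Z (i - 1)) (Z (i + 1 - 1)) := by
      rw [add_sub_right_comm]
      exact hZ (i - 1)
    rw [← hZc 0]
    exact isGorensteinProjective_of_isSyzygy_int shifted fun i => horth (i - 1)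

theorem isGorensteinProjective_iff_exists_isSyzygy (M : ModuleCat.{u} R) :
    IsGorensteinProjective R M ↔
      ∃ G : ModuleCat.{u} R, IsSyzygy M G ∧ IsGorensteinProjective R G := by
  simp only [isGorensteinProjective_iff_exists_cosyzygies]
  constructor
  · rintro ⟨c, rfl, hc⟩
    exact ⟨c 1, (hc 0).1, fun n => c (n + 1), rfl, fun n => hc (n + 1)⟩
  · rintro ⟨_, hM, c, rfl, hc⟩
    refine ⟨fun | 0 => M | n + 1 => c n, rfl, ?_⟩
    rintro (_ | n)
    exacts [⟨hM, hM.isLeftOrthogonalToProjectives (hc 0).2⟩, hc n]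

end Modules

/-- A module `M` is Gorenstein projective iff there is a short exact sequence
`0 → M → P → G → 0` with `P` projective and `G` Gorenstein projective. -/
theorem isGorensteinProjective_iff_exists_shortExact_projective
    (R : Type u) [Ring R] (M : Type u) [AddCommGroup M] [Module R M] :
    IsGorensteinProjective R M ↔
      ∃ (P G : Type u) (_ : AddCommGroup P) (_ : Module R P) (_ : AddCommGroup G)
        (_ : Module R G) (f : M →ₗ[R] P) (g : P →ₗ[R] G),
        IsShortExact f g ∧ Module.Projective R P ∧ IsGorensteinProjective R G := by
  rw [isGorensteinProjective_iff_exists_isSyzygy (ModuleCat.of R M)]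
  simp only [isSyzygy_iff_exists_isShortExact]
  constructor
  · rintro ⟨G, ⟨P, f, g, hfg, hP⟩, hG⟩
    exact ⟨P, G, _, _, _, _, f, g, hfg, hP, hG⟩
  · rintro ⟨P, G, _, _, _, _, f, g, hfg, hP, hG⟩
    exact ⟨ModuleCat.of R G, ⟨ModuleCat.of R P, f, g, hfg, hP⟩, hG⟩
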